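/- Let G be a DAG containing no active cycle, let X, Y, Z ⊆ V be disjoint with TRAILS(X,Y,Z) ≠ ∅, and let T be a minimal element of TRAILS(X,Y,Z) with respect to <_TRAIL, with converging nodes c_1, …, c_C. If for some i the arc c_{i+1} → c_i belongs to E and c_i ∈ Z, then c_{i+1} ∈ Z. -/

import Mathlib

open scoped Classical

/-- `E` is the arc relation of a (finite) directed acyclic graph: there are no
directed cycles (hence also no loops and no pairs of opposite arcs). -/
def IsDAG {V : Type*} (E : V → V → Prop) : Prop :=
  ∀ v : V, ¬ Relation.TransGen E v v

/-- `d` is a descendant of `v`: there is a (nonempty) directed path from `v` to `d`. -/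
def Desc {V : Type*} (E : V → V → Prop) (v d : V) : Prop :=
  Relation.TransGen E v d

/-- A trail: a sequence of `len + 1` pairwise distinct nodes
`f 0, f 1, …, f len`, consecutive ones joined by an arc of `E`
in one of the two possible directions.  Its length is `len`. -/
structure Trail (V : Type*) (E : V → V → Prop) where
  len : ℕ
  f : ℕ → V
  arcs : ∀ i, i < len → E (f i) (f (i + 1)) ∨ E (f (i + 1)) (f i)
  inj : ∀ i, i ≤ len → ∀ j, j ≤ len → f i = f j → i = j

namespace Trail

variable {V : Type*} {E : V → V → Prop}

/-- The trail has a converging connection at the interior index `i`: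
`f (i-1) → f i ← f (i+1)`. -/
def ConvAt (T : Trail V E) (i : ℕ) : Prop :=
  0 < i ∧ i < T.len ∧ E (T.f (i - 1)) (T.f i) ∧ E (T.f (i + 1)) (T.f i)

/-- The trail is activated by `Z`: every interior converging node is in `Z` or has a
descendant in `Z`, and every interior non-converging node is not in `Z`. -/
def ActivatedBy (T : Trail V E) (Z : Set V) : Prop :=
  ∀ i, 0 < i → i < T.len →
    (T.ConvAt i → (T.f i ∈ Z ∨ ∃ d ∈ Z, Desc E (T.f i) d)) ∧
    (¬ T.ConvAt i → T.f i ∉ Z)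

/-- The trail has a chord: an arc of `E` between two non-consecutive nodes. -/
def HasChord (T : Trail V E) : Prop :=
  ∃ i j, i + 1 < j ∧ j ≤ T.len ∧ (E (T.f i) (T.f j) ∨ E (T.f j) (T.f i))

end Trail

/-- `E` contains an active cycle: a closed trail
`v ← x 0 ⇄ x 1 ⇄ ⋯ ⇄ x n ⇄ x (n+1) → v` (so `w = x 0` and `z = x (n+1)` are
distinct parents of `v`), with `n ≥ 1`, such that the trail
`x 0 ⇄ ⋯ ⇄ x (n+1)` has no converging connection and the closed trail has no chords. -/
def HasActiveCycle {V : Type*} (E : V → V → Prop) : Prop :=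
  ∃ (v : V) (n : ℕ) (x : ℕ → V),
    1 ≤ n ∧
    E (x 0) v ∧ E (x (n + 1)) v ∧
    (∀ i, i ≤ n + 1 → x i ≠ v) ∧
    (∀ i, i ≤ n + 1 → ∀ j, j ≤ n + 1 → x i = x j → i = j) ∧
    (∀ i, i < n + 1 → E (x i) (x (i + 1)) ∨ E (x (i + 1)) (x i)) ∧
    (∀ i, 0 < i → i < n + 1 → ¬ (E (x (i - 1)) (x i) ∧ E (x (i + 1)) (x i))) ∧
    (∀ i j, i + 1 < j → j ≤ n + 1 → ¬ (i = 0 ∧ j = n + 1) →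
      ¬ E (x i) (x j) ∧ ¬ E (x j) (x i)) ∧
    (∀ i, 1 ≤ i → i ≤ n → ¬ E v (x i) ∧ ¬ E (x i) v)

/-- A descendant path from `c` to `Z` with `n` intermediate nodes:
`c = d 0 → d 1 → ⋯ → d n → d (n+1) ∈ Z`, with `d j ∉ Z` for all `j ≤ n`. -/
def IsDescPath {V : Type*} (E : V → V → Prop) (Z : Set V) (c : V) (d : ℕ → V) (n : ℕ) :
    Prop :=
  d 0 = c ∧ d (n + 1) ∈ Z ∧ (∀ j, j ≤ n → d j ∉ Z) ∧ (∀ j, j ≤ n → E (d j) (d (j + 1)))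

/-- `n_Z(c)`: the least number of intermediate nodes of a descendant path from `c` to `Z`
(this is `0` when `c ∈ Z`, since then no descendant path exists and `sInf ∅ = 0`). -/
noncomputable def nZ {V : Type*} (E : V → V → Prop) (Z : Set V) (c : V) : ℕ :=
  sInf {n | ∃ d : ℕ → V, IsDescPath E Z c d n}

namespace Trail

variable {V : Type*} {E : V → V → Prop}

/-- The set of (interior) indices of `T` carrying a converging connection. -/
noncomputable def convIdx (T : Trail V E) : Finset ℕ :=
  (Finset.Ioo 0 T.len).filter fun i => T.ConvAt i

/-- The weight vector `(|{c₁,…,c_C} \ Z|, C, Σᵢ n_Z(i), Σᵢ n_t(i))` of a trail,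
whose lexicographic comparison induces the order `<_TRAIL`.  (The total length
of the subtrails, `Σᵢ n_t(i)`, equals `len - 1 - C`.) -/
noncomputable def weight (T : Trail V E) (Z : Set V) : ℕ × ℕ × ℕ × ℕ :=
  ((T.convIdx.filter fun i => T.f i ∉ Z).card,
   T.convIdx.card,
   ∑ i ∈ T.convIdx, nZ E Z (T.f i),
   T.len - 1 - T.convIdx.card)

end Trail

/-- Strict lexicographic order on `ℕ × ℕ × ℕ × ℕ`. -/
def LexLt4 (a b : ℕ × ℕ × ℕ × ℕ) : Prop :=
  a.1 < b.1 ∨ (a.1 = b.1 ∧ (a.2.1 < b.2.1 ∨ (a.2.1 = b.2.1 ∧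
    (a.2.2.1 < b.2.2.1 ∨ (a.2.2.1 = b.2.2.1 ∧ a.2.2.2 < b.2.2.2)))))

/-- `T ∈ TRAILS(X, Y, Z)`: `T` is a trail from a node of `X` to a node of `Y`
activated by `Z`. -/
def InTRAILS {V : Type*} {E : V → V → Prop} (T : Trail V E) (X Y Z : Set V) : Prop :=
  T.f 0 ∈ X ∧ T.f T.len ∈ Y ∧ T.ActivatedBy Z

/-- `T` is a minimal element of `TRAILS(X, Y, Z)` with respect to `<_TRAIL`. -/
def MinimalTrail {V : Type*} {E : V → V → Prop} (T : Trail V E) (X Y Z : Set V) : Prop :=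
  InTRAILS T X Y Z ∧
    ∀ T' : Trail V E, InTRAILS T' X Y Z → ¬ LexLt4 (T'.weight Z) (T.weight Z)

/-!
If `f b ∉ Z`, replace the stretch of the trail between `f a` and `f b` by the arc `f b → f a`.
The node `f a` is still entered from both sides, while `f b` now has an outgoing arc: it is no
longer converging, and it does not block the new trail precisely because it lies outside `Z`.
All other connections are unchanged, so the new trail is activated by `Z` and has one converging
node outside `Z` fewer, which contradicts minimality in the first component of the weight.
-/

lemma IsDAG.asymm {V : Type*} {E : V → V → Prop} (hdag : IsDAG E) : Std.Asymm E :=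
  ⟨fun u _ huv hvu => hdag u (.tail (.single huv) hvu)⟩

namespace Trail

/-- The position in a trail of the `i`-th node that remains when the `k` nodes after
position `a` are removed. -/
def skipIndex (a k i : ℕ) : ℕ :=
  if i ≤ a then i else i + k

section SkipIndex

variable {a k i : ℕ}

lemma skipIndex_of_le (h : i ≤ a) : skipIndex a k i = i :=
  if_pos h

lemma skipIndex_of_lt (h : a < i) : skipIndex a k i = i + k :=
  if_neg h.not_ge

lemma skipIndex_strictMono (a k : ℕ) : StrictMono (skipIndex a k) := by
  intro i j hij
  unfold skipIndex
  split_ifs <;> omega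

lemma skipIndex_le_add : skipIndex a k i ≤ i + k := by
  unfold skipIndex
  split_ifs <;> omega

lemma skipIndex_pos (hi : 0 < i) : 0 < skipIndex a k i :=
  hi.trans_le ((skipIndex_strictMono a k).le_apply)

lemma skipIndex_ne_of_ne (hi : i ≠ a + 1) : skipIndex a k i ≠ a + 1 + k := by
  simpa [skipIndex_of_lt a.lt_succ_self] using (skipIndex_strictMono a k).injective.ne hi

end SkipIndex

variable {V : Type*} {E : V → V → Prop}

lemma mem_convIdx {T : Trail V E} {i : ℕ} : i ∈ T.convIdx ↔ T.ConvAt i := by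
  simp only [convIdx, Finset.mem_filter, Finset.mem_Ioo, and_iff_right_iff_imp]
  exact fun h => ⟨h.1, h.2.1⟩

/-- The trail obtained from `T` by replacing its part between the positions `a` and `a + 1 + k`
by a single arc. Writing the right end as `a + 1 + k` avoids truncated subtraction in the
positions. -/
def shortcut (T : Trail V E) (a k : ℕ) (hk : a + 1 + k ≤ T.len)
    (hE : E (T.f a) (T.f (a + 1 + k)) ∨ E (T.f (a + 1 + k)) (T.f a)) : Trail V E where
  len := T.len - k
  f i := T.f (skipIndex a k i)
  arcs i hi := by
    rcases lt_trichotomy i a with h | rfl | h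
    · rw [skipIndex_of_le h.le, skipIndex_of_le (Nat.succ_le_of_lt h)]
      exact T.arcs i (by omega)
    · rwa [skipIndex_of_le le_rfl, skipIndex_of_lt i.lt_succ_self]
    · rw [skipIndex_of_lt h, skipIndex_of_lt (by omega), Nat.add_right_comm]
      exact T.arcs (i + k) (by omega)
  inj i hi j hj hij := by
    have hkeep {m : ℕ} (hm : m ≤ T.len - k) : skipIndex a k m ≤ T.len :=
      skipIndex_le_add.trans (by omega)
    exact (skipIndex_strictMono a k).injective (T.inj _ (hkeep hi) _ (hkeep hj) hij)

section Shortcut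

variable (T : Trail V E) {a k i : ℕ} (hk : a + 1 + k ≤ T.len)

section EitherDirection

variable (hE : E (T.f a) (T.f (a + 1 + k)) ∨ E (T.f (a + 1 + k)) (T.f a))

lemma shortcut_f_zero : (T.shortcut a k hk hE).f 0 = T.f 0 :=
  congrArg T.f (skipIndex_of_le a.zero_le)

lemma shortcut_f_len : (T.shortcut a k hk hE).f (T.shortcut a k hk hE).len = T.f T.len := by
  change T.f (skipIndex a k (T.len - k)) = T.f T.len
  rw [skipIndex_of_lt (by omega), Nat.sub_add_cancel (by omega)]

lemma convAt_shortcut_of_lt (hi : i < a) :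
    (T.shortcut a k hk hE).ConvAt i ↔ T.ConvAt i := by
  have hlen : i < T.len - k ↔ i < T.len := by omega
  simp only [ConvAt, shortcut, hlen, skipIndex_of_le hi.le,
    skipIndex_of_le (show i - 1 ≤ a by omega), skipIndex_of_le (Nat.succ_le_of_lt hi)]

lemma convAt_shortcut_of_gt (hi : a + 1 < i) :
    (T.shortcut a k hk hE).ConvAt i ↔ T.ConvAt (i + k) := by
  have hpos : 0 < i ↔ 0 < i + k := by omega
  have hlen : i < T.len - k ↔ i + k < T.len := by omega
  have hpred : i - 1 + k = i + k - 1 := by omega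
  simp only [ConvAt, shortcut, hpos, hlen, skipIndex_of_lt (show a < i by omega),
    skipIndex_of_lt (show a < i - 1 by omega), skipIndex_of_lt (show a < i + 1 by omega),
    hpred, Nat.add_right_comm i 1 k]

end EitherDirection

variable (hE : E (T.f (a + 1 + k)) (T.f a))

lemma convAt_shortcut_left (ha : T.ConvAt a) :
    (T.shortcut a k hk (.inr hE)).ConvAt a := by
  obtain ⟨hpos, -, hpred, -⟩ := ha
  have hlen : a < T.len - k := by omega
  simpa [ConvAt, shortcut, skipIndex, hpos, hlen, hpred] using hE

lemma not_convAt_shortcut_right [Std.Asymm E] :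
    ¬ (T.shortcut a k hk (.inr hE)).ConvAt (a + 1) := by
  rintro ⟨-, -, hpred, -⟩
  simp only [shortcut, Nat.add_sub_cancel, skipIndex_of_le le_rfl,
    skipIndex_of_lt a.lt_succ_self] at hpred
  exact Std.Asymm.asymm _ _ hpred hE

lemma convAt_shortcut_iff [Std.Asymm E] (ha : T.ConvAt a) :
    (T.shortcut a k hk (.inr hE)).ConvAt i ↔ i ≠ a + 1 ∧ T.ConvAt (skipIndex a k i) := by
  rcases lt_trichotomy i (a + 1) with h | rfl | h
  · rw [skipIndex_of_le (Nat.le_of_lt_succ h), and_iff_right h.ne]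
    obtain rfl | h := (Nat.le_of_lt_succ h).eq_or_lt
    · exact iff_of_true (T.convAt_shortcut_left hk hE ha) ha
    · exact T.convAt_shortcut_of_lt hk _ h
  · exact iff_of_false (T.not_convAt_shortcut_right hk hE) fun h => h.1 rfl
  · rw [skipIndex_of_lt (by omega), and_iff_right h.ne']
    exact T.convAt_shortcut_of_gt hk _ h

lemma ActivatedBy.shortcut [Std.Asymm E] {Z : Set V} {T : Trail V E} (hT : T.ActivatedBy Z)
    (hk : a + 1 + k ≤ T.len) (hE : E (T.f (a + 1 + k)) (T.f a)) (ha : T.ConvAt a)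
    (hbZ : T.f (a + 1 + k) ∉ Z) : (T.shortcut a k hk (.inr hE)).ActivatedBy Z := by
  intro i hpos hlt
  obtain ⟨hconv, hnonconv⟩ := hT _ (skipIndex_pos hpos)
    (skipIndex_le_add.trans_lt (Nat.add_lt_of_lt_sub hlt))
  rw [T.convAt_shortcut_iff hk hE ha]
  refine ⟨fun h => hconv h.2, fun h => ?_⟩
  by_cases hi : i = a + 1
  · simpa only [Trail.shortcut, hi, skipIndex_of_lt a.lt_succ_self] using hbZ
  · exact hnonconv fun hc => h ⟨hi, hc⟩

lemma card_convIdx_notMem_shortcut_lt [Std.Asymm E] {Z : Set V} (ha : T.ConvAt a)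
    (hb : T.ConvAt (a + 1 + k)) (hbZ : T.f (a + 1 + k) ∉ Z) :
    ((T.shortcut a k hk (.inr hE)).convIdx.filter fun i =>
      (T.shortcut a k hk (.inr hE)).f i ∉ Z).card <
      (T.convIdx.filter fun i => T.f i ∉ Z).card := by
  have hb_mem : a + 1 + k ∈ T.convIdx.filter fun i => T.f i ∉ Z :=
    Finset.mem_filter.2 ⟨mem_convIdx.2 hb, hbZ⟩
  refine (Finset.card_le_card_of_injOn (skipIndex a k) (fun i hi => ?_)
    (skipIndex_strictMono a k).injective.injOn).trans_lt (Finset.card_erase_lt_of_mem hb_mem)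
  obtain ⟨hconv, hiZ⟩ := Finset.mem_filter.1 hi
  obtain ⟨hia, hconv⟩ := (T.convAt_shortcut_iff hk hE ha).1 (mem_convIdx.1 hconv)
  exact Finset.mem_erase.2
    ⟨skipIndex_ne_of_ne hia, Finset.mem_filter.2 ⟨mem_convIdx.2 hconv, hiZ⟩⟩

end Shortcut

end Trail

lemma InTRAILS.shortcut {V : Type*} {E : V → V → Prop} [Std.Asymm E] {X Y Z : Set V}
    {T : Trail V E} (hT : InTRAILS T X Y Z) {a k : ℕ} (hk : a + 1 + k ≤ T.len)
    (hE : E (T.f (a + 1 + k)) (T.f a)) (ha : T.ConvAt a) (hbZ : T.f (a + 1 + k) ∉ Z) :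
    InTRAILS (T.shortcut a k hk (.inr hE)) X Y Z :=
  ⟨(T.shortcut_f_zero hk _).symm ▸ hT.1, (T.shortcut_f_len hk _).symm ▸ hT.2.1,
    hT.2.2.shortcut hk hE ha hbZ⟩

theorem minimal_trail_arc_backward_in_Z_general
    {V : Type*} {E : V → V → Prop} [Std.Asymm E] {X Y Z : Set V} {T : Trail V E}
    (hT : MinimalTrail T X Y Z) {a b : ℕ} (ha : T.ConvAt a) (hb : T.ConvAt b) (hab : a < b)
    (hE : E (T.f b) (T.f a)) : T.f b ∈ Z := by
  obtain ⟨k, rfl⟩ := Nat.exists_eq_add_of_le (Nat.succ_le_of_lt hab)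
  have hk : a + 1 + k ≤ T.len := hb.2.1.le
  by_contra hbZ
  exact hT.2 _ (hT.1.shortcut hk hE ha hbZ)
    (.inl (T.card_convIdx_notMem_shortcut_lt hk hE ha hb hbZ))

/-- For a minimal trail `T` of `TRAILS(X,Y,Z)`: if `cᵢ₊₁ → cᵢ ∈ E`
for consecutive converging nodes and `cᵢ ∈ Z`, then `cᵢ₊₁ ∈ Z`. -/
theorem minimal_trail_arc_backward_in_Z
    {V : Type*} [Fintype V] (E : V → V → Prop) (hdag : IsDAG E)
    (hnac : ¬ HasActiveCycle E) (X Y Z : Set V)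
    (hXY : Disjoint X Y) (hXZ : Disjoint X Z) (hYZ : Disjoint Y Z)
    (hne : ∃ T₀ : Trail V E, InTRAILS T₀ X Y Z)
    (T : Trail V E) (hT : MinimalTrail T X Y Z) :
    ∀ a b, T.ConvAt a → T.ConvAt b → a < b →
      (∀ i, a < i → i < b → ¬ T.ConvAt i) →
      E (T.f b) (T.f a) → T.f a ∈ Z → T.f b ∈ Z := by
  have := hdag.asymm
  exact fun _ _ ha hb hab _ hE _ => minimal_trail_arc_backward_in_Z_general hT ha hb hab hE
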